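/- Let m = r + (n−1)s and let κ̂ : V^{⊗r}⊗(V*)^{⊗s} → V^{⊗m} be the injective R-linear map id_{V^{⊗r}}⊗κ^{⊗s}, where κ(v*_l) = (−q)^l Σ_{w∈S_{n−1}}(−q)^{ℓ(w)} v_{(1,…,l̂,…,n)·w}. Suppose φ ∈ End_R(V^{⊗m}) commutes with all Hecke operators S_1,…,S_{m−1}, and write φ(v_t) = Σ_{s∈I(n,m)} γ(s,t)v_s. Then: (i) the R-linear form on degree-m monomials given by x_{s_1t_1}⋯x_{s_mt_m} ↦ γ(s,t) descends to a well-defined form φ̃ on A_q(n,m); (ii) φ preserves the image of κ̂; and (iii) for all k ∈ I(n,r), l ∈ I(n,s): φ(κ̂(v_{k|l})) = Σ_{i∈I(n,r), j∈I(n,s)} φ̃( ι(x_{i_1k_1}⋯x_{i_rk_r}·x*_{j_1l_1}⋯x*_{j_sl_s}) ) · κ̂(v_{i|j}). -/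

import Mathlib

open scoped BigOperators

/-- Free algebra on two families of generators `x_{ij}` and `x*_{ij}`. -/
abbrev FA2 (R : Type*) [CommRing R] (n : ℕ) :=
  FreeAlgebra R ((Fin n × Fin n) ⊕ (Fin n × Fin n))

/-- The generator `x_{ij}`. -/
def Xg (R : Type*) [CommRing R] (n : ℕ) (i j : Fin n) : FA2 R n :=
  FreeAlgebra.ι R (Sum.inl (i, j))

/-- The generator `x*_{ij}`. -/
def Xs (R : Type*) [CommRing R] (n : ℕ) (i j : Fin n) : FA2 R n :=
  FreeAlgebra.ι R (Sum.inr (i, j))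

/-- The monomial in the `x`-generators given by a list of index pairs. -/
def xW (R : Type*) [CommRing R] (n : ℕ) (l : List (Fin n × Fin n)) : FA2 R n :=
  (l.map fun p => Xg R n p.1 p.2).prod

/-- The monomial in the `x*`-generators given by a list of index pairs. -/
def xsW (R : Type*) [CommRing R] (n : ℕ) (l : List (Fin n × Fin n)) : FA2 R n :=
  (l.map fun p => Xs R n p.1 p.2).prod

/-- The quantum-matrix relations among the `x`-generators (parameter `q`). -/
def XRel2 (R : Type*) [CommRing R] (q : Rˣ) (n : ℕ) (h : FA2 R n) : Prop :=
  (∃ i j k : Fin n, i < j ∧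
    h = Xg R n i k * Xg R n j k - (q : R) • (Xg R n j k * Xg R n i k)) ∨
  (∃ k i j : Fin n, i < j ∧
    h = Xg R n k i * Xg R n k j - (q : R) • (Xg R n k j * Xg R n k i)) ∨
  (∃ i j k l : Fin n, i < k ∧ l < j ∧
    h = Xg R n i j * Xg R n k l - Xg R n k l * Xg R n i j) ∨
  (∃ i j k l : Fin n, i < k ∧ j < l ∧
    h = Xg R n i j * Xg R n k l - Xg R n k l * Xg R n i j -
      ((q : R) - ((q⁻¹ : Rˣ) : R)) • (Xg R n i l * Xg R n k j))

/-- The quantum-matrix relations among the `x*`-generators (parameter `q⁻¹`). -/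
def XsRel2 (R : Type*) [CommRing R] (q : Rˣ) (n : ℕ) (h : FA2 R n) : Prop :=
  (∃ i j k : Fin n, i < j ∧
    h = Xs R n i k * Xs R n j k - ((q⁻¹ : Rˣ) : R) • (Xs R n j k * Xs R n i k)) ∨
  (∃ k i j : Fin n, i < j ∧
    h = Xs R n k i * Xs R n k j - ((q⁻¹ : Rˣ) : R) • (Xs R n k j * Xs R n k i)) ∨
  (∃ i j k l : Fin n, i < k ∧ l < j ∧
    h = Xs R n i j * Xs R n k l - Xs R n k l * Xs R n i j) ∨
  (∃ i j k l : Fin n, i < k ∧ j < l ∧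
    h = Xs R n i j * Xs R n k l - Xs R n k l * Xs R n i j +
      ((q : R) - ((q⁻¹ : Rˣ) : R)) • (Xs R n i l * Xs R n k j))

/-- The generating set of the submodule `Y` of relations defining
`A_q(n;r,s)` inside `F(n,r) ⊗ F_*(n,s)` (monomials are written with all
`x`-letters in front of all `x*`-letters). -/
def Ygen (R : Type*) [CommRing R] (q : Rˣ) (n : ℕ) (r s : ℕ) : Set (FA2 R n) :=
  {a | (∃ (u v w : List (Fin n × Fin n)) (h2 : FA2 R n),
          u.length + v.length + 2 = r ∧ w.length = s ∧ XRel2 R q n h2 ∧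
          a = xW R n u * h2 * xW R n v * xsW R n w) ∨
       (∃ (u w1 w2 : List (Fin n × Fin n)) (h2 : FA2 R n),
          u.length = r ∧ w1.length + w2.length + 2 = s ∧ XsRel2 R q n h2 ∧
          a = xW R n u * xsW R n w1 * h2 * xsW R n w2) ∨
       (∃ (i j : Fin n) (u v w1 w2 : List (Fin n × Fin n)),
          i ≠ j ∧ u.length + v.length + 1 = r ∧ w1.length + w2.length + 1 = s ∧
          a = ∑ k : Fin n,
            xW R n u * Xg R n i k * xW R n v * xsW R n w1 * Xs R n j k * xsW R n w2) ∨
       (∃ (i j : Fin n) (u v w1 w2 : List (Fin n × Fin n)),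
          i ≠ j ∧ u.length + v.length + 1 = r ∧ w1.length + w2.length + 1 = s ∧
          a = ∑ k : Fin n, ((q ^ (2 * ((k : ℕ) + 1)) : Rˣ) : R) •
            (xW R n u * Xg R n k i * xW R n v * xsW R n w1 * Xs R n k j * xsW R n w2)) ∨
       (∃ (i j : Fin n) (u v w1 w2 : List (Fin n × Fin n)),
          u.length + v.length + 1 = r ∧ w1.length + w2.length + 1 = s ∧
          a = (∑ k : Fin n, ((q ^ (2 * (k : ℤ) - 2 * (i : ℤ)) : Rˣ) : R) •
                (xW R n u * Xg R n k i * xW R n v * xsW R n w1 * Xs R n k i * xsW R n w2)) -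
              ∑ k : Fin n,
                xW R n u * Xg R n j k * xW R n v * xsW R n w1 * Xs R n j k * xsW R n w2)}

/-- The submodule `Y` of relations defining `A_q(n;r,s)`. -/
def Ysub (R : Type*) [CommRing R] (q : Rˣ) (n : ℕ) (r s : ℕ) : Submodule R (FA2 R n) :=
  Submodule.span R (Ygen R q n r s)

/-- The `R`-span `F(n,r) ⊗ F_*(n,s)` of the bidegree-`(r,s)` monomials
(`x`-letters first). -/
def Frs (R : Type*) [CommRing R] (n : ℕ) (r s : ℕ) : Submodule R (FA2 R n) :=
  Submodule.span R
    {a | ∃ u v : List (Fin n × Fin n), u.length = r ∧ v.length = s ∧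
          a = xW R n u * xsW R n v}

/-- The element `𝔡et_q^{(k)}` of `A_q(n;k,k)` (here: its canonical
representative in the span of monomials), defined recursively by
`𝔡et_q^{(0)} = 1` and `𝔡et_q^{(k)} = Σ_l x_{1l}·𝔡et_q^{(k−1)}·x*_{1l}`. -/
noncomputable def detMix (R : Type*) [CommRing R] (n : ℕ) [NeZero n] : ℕ → FA2 R n
  | 0 => 1
  | (k + 1) => ∑ l : Fin n, Xg R n 0 l * detMix R n k * Xs R n 0 l

/-- Number of inversions of a permutation of `Fin k` (its Coxeter length). -/
def invCount {k : ℕ} (w : Equiv.Perm (Fin k)) : ℕ :=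
  ((Finset.univ : Finset (Fin k × Fin k)).filter
    (fun p => p.1 < p.2 ∧ w p.2 < w p.1)).card

/-- Ordered product of a tuple of elements of a (possibly noncommutative) monoid. -/
def oprod {A : Type*} [Monoid A] {k : ℕ} (g : Fin k → A) : A :=
  (List.ofFn g).prod

/-- Number of inversions of a finite sequence. -/
def seqInv {n k : ℕ} (rows : Fin k → Fin n) : ℕ :=
  ((Finset.univ : Finset (Fin k × Fin k)).filter
    (fun p => p.1 < p.2 ∧ rows p.2 < rows p.1)).card

/-- The general right quantum minor `(rows | cols)_r` with respect to a family
`gen` of generators and parameter `qq`.  For strictly increasing row sequences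
it is `Σ_w (−qq)^{ℓ(w)}·gen(rows(w 1), cols 1)⋯gen(rows(w k), cols k)`; it is
extended to arbitrary row sequences by the exchange rule
`(…i_l i_{l+1}…|cols)_r = −qq⁻¹·(…i_{l+1} i_l…|cols)_r` for `i_l > i_{l+1}`
(so an inversion contributes a factor `−qq⁻¹`), and it vanishes when two row
indices coincide. -/
noncomputable def genMinorR {R : Type*} [CommRing R] {A : Type*} [Ring A] [Algebra R A]
    (qq : Rˣ) {n k : ℕ} (gen : Fin n → Fin n → A) (rows cols : Fin k → Fin n) : A :=
  if Function.Injective rows then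
    ((((-qq⁻¹) ^ seqInv rows : Rˣ) : R) • ∑ w : Equiv.Perm (Fin k),
      (((-qq) ^ invCount w : Rˣ) : R) •
        oprod (fun t => gen ((rows ∘ Tuple.sort rows) (w t)) (cols t)))
  else 0

/-- The submodule spanned by the products `m·𝔡et_q^{(1)}·m*` with `m` a
degree-`a` monomial in the `x`-generators and `m*` a degree-`b` monomial in
the `x*`-generators. -/
noncomputable def Zdet (R : Type*) [CommRing R] (n : ℕ) [NeZero n] (a b : ℕ) :
    Submodule R (FA2 R n) :=
  Submodule.span R
    {z | ∃ u v : List (Fin n × Fin n), u.length = a ∧ v.length = b ∧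
          z = xW R n u * detMix R n 1 * xsW R n v}

/-- The increasing enumeration of `{1,…,n} \ {i}` (0-based). -/
def omitIdx {n : ℕ} (i : Fin n) (t : Fin (n - 1)) : Fin n :=
  if (t : ℕ) < (i : ℕ) then ⟨t, by have := t.2; omega⟩ else ⟨(t : ℕ) + 1, by have := t.2; omega⟩

/-- The sequence `i, f 0, f 1, …` of length `n` (prepending an entry to a
sequence of length `n-1`). -/
def consSeq {n : ℕ} (i : Fin n) (f : Fin (n - 1) → Fin n) : Fin n → Fin n :=
  fun t => if h : (t : ℕ) = 0 then i else f ⟨(t : ℕ) - 1, by have := t.2; omega⟩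

/-- The defining relations of the quantum matrix bialgebra `A_q(n)`. -/
inductive QMRel (R : Type*) [CommRing R] (q : Rˣ) (n : ℕ) :
    FreeAlgebra R (Fin n × Fin n) → FreeAlgebra R (Fin n × Fin n) → Prop
  | col {i j k : Fin n} (h : i < j) :
      QMRel R q n (FreeAlgebra.ι R (i, k) * FreeAlgebra.ι R (j, k))
        ((q : R) • (FreeAlgebra.ι R (j, k) * FreeAlgebra.ι R (i, k)))
  | row {k i j : Fin n} (h : i < j) :
      QMRel R q n (FreeAlgebra.ι R (k, i) * FreeAlgebra.ι R (k, j))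
        ((q : R) • (FreeAlgebra.ι R (k, j) * FreeAlgebra.ι R (k, i)))
  | comm {i j k l : Fin n} (h1 : i < k) (h2 : l < j) :
      QMRel R q n (FreeAlgebra.ι R (i, j) * FreeAlgebra.ι R (k, l))
        (FreeAlgebra.ι R (k, l) * FreeAlgebra.ι R (i, j))
  | qcomm {i j k l : Fin n} (h1 : i < k) (h2 : j < l) :
      QMRel R q n (FreeAlgebra.ι R (i, j) * FreeAlgebra.ι R (k, l))
        (FreeAlgebra.ι R (k, l) * FreeAlgebra.ι R (i, j) +
          ((q : R) - ((q⁻¹ : Rˣ) : R)) • (FreeAlgebra.ι R (i, l) * FreeAlgebra.ι R (k, j)))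

/-- The quantum matrix bialgebra `A_q(n)`. -/
abbrev AqAlg (R : Type*) [CommRing R] (q : Rˣ) (n : ℕ) := RingQuot (QMRel R q n)

/-- The generator `x_{ij}` of `A_q(n)`. -/
def xq (R : Type*) [CommRing R] (q : Rˣ) (n : ℕ) (i j : Fin n) : AqAlg R q n :=
  RingQuot.mkAlgHom R (QMRel R q n) (FreeAlgebra.ι R (i, j))

/-- The right quantum minor `(i_1 … i_k | j_1 … j_k)_r` for an increasing row
sequence and an arbitrary column sequence. -/
noncomputable def qMinorR (R : Type*) [CommRing R] (q : Rˣ) (n : ℕ) {k : ℕ}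
    (rows cols : Fin k → Fin n) : AqAlg R q n :=
  ∑ w : Equiv.Perm (Fin k),
    (((-q) ^ invCount w : Rˣ) : R) • oprod (fun t => xq R q n (rows (w t)) (cols t))

/-- The left quantum minor `(i_1 … i_k | j_1 … j_k)_l` for an arbitrary row
sequence and an increasing column sequence. -/
noncomputable def qMinorL (R : Type*) [CommRing R] (q : Rˣ) (n : ℕ) {k : ℕ}
    (rows cols : Fin k → Fin n) : AqAlg R q n :=
  ∑ w : Equiv.Perm (Fin k),
    (((-q) ^ invCount w : Rˣ) : R) • oprod (fun t => xq R q n (rows t) (cols (w t)))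

/-- The quantum determinant. -/
noncomputable def detq (R : Type*) [CommRing R] (q : Rˣ) (n : ℕ) : AqAlg R q n :=
  qMinorR R q n (fun t => t) (fun t => t)

/-- The complementary `(n-1) × (n-1)` quantum minor `(1…î…n | 1…ĵ…n)`. -/
noncomputable def compMinor (R : Type*) [CommRing R] (q : Rˣ) (n : ℕ) (i j : Fin n) :
    AqAlg R q n :=
  qMinorR R q n (omitIdx i) (omitIdx j)

/-- The algebra homomorphism `ι̂` from the free algebra on the `x`- and
`x*`-generators to `A_q(n)`, determined by `x_{ij} ↦ x_{ij}` and
`x*_{ij} ↦ (−q)^{j−i}·(1…î…n | 1…ĵ…n)`. -/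
noncomputable def iotaHat (R : Type*) [CommRing R] (q : Rˣ) (n : ℕ) :
    FA2 R n →ₐ[R] AqAlg R q n :=
  FreeAlgebra.lift R fun g =>
    match g with
    | Sum.inl (i, j) => xq R q n i j
    | Sum.inr (i, j) => (((-q) ^ ((j : ℤ) - (i : ℤ)) : Rˣ) : R) • compMinor R q n i j

/-- The homogeneous component `A_q(n,m)`: the `R`-span in `A_q(n)` of the
degree-`m` monomials. -/
noncomputable def AqDeg (R : Type*) [CommRing R] (q : Rˣ) (n : ℕ) (m : ℕ) :
    Submodule R (AqAlg R q n) :=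
  Submodule.span R
    {a | ∃ g : List (Fin n × Fin n), g.length = m ∧ a = (g.map fun p => xq R q n p.1 p.2).prod}

/-- Tensor space `V^{⊗m}` for `V = R^n`, with basis indexed by multi-indices. -/
abbrev TSp (R : Type*) [CommRing R] (n m : ℕ) := ((Fin m → Fin n) →₀ R)

/-- The multi-index `j` with the entries in positions `p`, `p+1` swapped. -/
def swapIdx {n m : ℕ} (j : Fin m → Fin n) (p : ℕ) (hp : p + 1 < m) : Fin m → Fin n :=
  Function.update (Function.update j ⟨p, by omega⟩ (j ⟨p + 1, hp⟩)) ⟨p + 1, hp⟩ (j ⟨p, by omega⟩)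

/-- The Hecke operator `S_t` (`t = p+1`, acting on tensor positions `p`, `p+1`,
0-based) on tensor space. -/
noncomputable def heckeOpX (R : Type*) [CommRing R] (q : Rˣ) (n m : ℕ)
    (p : ℕ) (hp : p + 1 < m) : TSp R n m →ₗ[R] TSp R n m :=
  Finsupp.linearCombination R fun j : Fin m → Fin n =>
    if j ⟨p, by omega⟩ = j ⟨p + 1, hp⟩ then
      ((q⁻¹ : Rˣ) : R) • Finsupp.single j 1
    else if j ⟨p, by omega⟩ < j ⟨p + 1, hp⟩ then
      Finsupp.single (swapIdx j p hp) 1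
    else
      Finsupp.single (swapIdx j p hp) 1 + (((q⁻¹ : Rˣ) : R) - (q : R)) • Finsupp.single j 1

/-- Concatenation of an `r`-multi-index with `s` blocks of length `n−1`,
producing a multi-index of length `r + (n−1)s`. -/
def catIdx {n : ℕ} [NeZero n] {r s : ℕ} (k : Fin r → Fin n) (g : Fin s → Fin (n - 1) → Fin n) :
    Fin (r + (n - 1) * s) → Fin n :=
  fun p =>
    if h : (p : ℕ) < r then k ⟨p, h⟩
    else if h2 : 0 < n - 1 then
      g ⟨((p : ℕ) - r) / (n - 1), by
            have hp := p.2
            have h3 : (p : ℕ) - r < (n - 1) * s := by omega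
            exact Nat.div_lt_of_lt_mul h3⟩
        ⟨((p : ℕ) - r) % (n - 1), Nat.mod_lt _ h2⟩
    else 0

/-- The injective map `κ̂ = id_{V^{⊗r}} ⊗ κ^{⊗s}` from the mixed tensor space
`V^{⊗r} ⊗ (V*)^{⊗s}` into ordinary tensor space `V^{⊗(r+(n−1)s)}`, where
`κ(v*_l) = (−q)^l·Σ_{w ∈ S_{n−1}} (−q)^{ℓ(w)} v_{(1,…,l̂,…,n)·w}`. -/
noncomputable def kappaHat (R : Type*) [CommRing R] (q : Rˣ) (n : ℕ) [NeZero n] (r s : ℕ) :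
    (((Fin r → Fin n) × (Fin s → Fin n)) →₀ R) →ₗ[R] TSp R n (r + (n - 1) * s) :=
  Finsupp.linearCombination R fun kl : (Fin r → Fin n) × (Fin s → Fin n) =>
    (((-q) ^ (∑ t, ((kl.2 t : ℕ) + 1)) : Rˣ) : R) •
      ∑ w : Fin s → Equiv.Perm (Fin (n - 1)),
        (((-q) ^ (∑ t, invCount (w t)) : Rˣ) : R) •
          Finsupp.single (catIdx kl.1 (fun t u => omitIdx (kl.2 t) (w t u))) 1

/-- The mixed monomial `x_{i_1k_1}⋯x_{i_rk_r}·x*_{j_1l_1}⋯x*_{j_sl_s}`. -/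
def mixedMono (R : Type*) [CommRing R] (n : ℕ) {r s : ℕ}
    (i k : Fin r → Fin n) (j l : Fin s → Fin n) : FA2 R n :=
  (List.ofFn fun u => Xg R n (i u) (k u)).prod * (List.ofFn fun u => Xs R n (j u) (l u)).prod

section helpers

theorem swapIdx_apply {n m : ℕ} (j : Fin m → Fin n) (p : ℕ) (hp : p + 1 < m) (x : Fin m) :
    swapIdx j p hp x = if (x : ℕ) = p + 1 then j ⟨p, by omega⟩ else
      if (x : ℕ) = p then j ⟨p + 1, hp⟩ else j x := by
  unfold swapIdx
  simp only [Function.update_apply, Fin.ext_iff]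

theorem swapIdx_swapIdx {n m : ℕ} (j : Fin m → Fin n) (p : ℕ) (hp : p + 1 < m) :
    swapIdx (swapIdx j p hp) p hp = j := by
  funext x
  simp only [swapIdx_apply]
  rcases x with ⟨x, hx⟩
  by_cases h1 : x = p + 1
  · subst h1; simp
  · by_cases h2 : x = p
    · subst h2; simp
    · simp [h1, h2]

theorem swapIdx_congr {n m : ℕ} (j : Fin m → Fin n) {p p' : ℕ} (h : p = p') (hp : p + 1 < m)
    (hp' : p' + 1 < m) : swapIdx j p hp = swapIdx j p' hp' := by
  subst h; rfl

theorem swapIdx_left {n m : ℕ} (j : Fin m → Fin n) (p : ℕ) (hp : p + 1 < m) :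
    swapIdx j p hp ⟨p, by omega⟩ = j ⟨p + 1, hp⟩ := by
  simp [swapIdx_apply]

theorem swapIdx_right {n m : ℕ} (j : Fin m → Fin n) (p : ℕ) (hp : p + 1 < m) :
    swapIdx j p hp ⟨p + 1, hp⟩ = j ⟨p, by omega⟩ := by
  simp [swapIdx_apply]

theorem heckeOpX_coeff (R : Type*) [CommRing R] (q : Rˣ) (n m : ℕ)
    (p : ℕ) (hp : p + 1 < m) (z : TSp R n m) (a : Fin m → Fin n) :
    heckeOpX R q n m p hp z a =
      if a ⟨p, by omega⟩ = a ⟨p + 1, hp⟩ then ((q⁻¹ : Rˣ) : R) * z a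
      else if a ⟨p, by omega⟩ < a ⟨p + 1, hp⟩ then z (swapIdx a p hp)
      else z (swapIdx a p hp) + (((q⁻¹ : Rˣ) : R) - (q : R)) * z a := by
  induction z using Finsupp.induction_linear with
  | zero => simp
  | add f g hf hg =>
    rw [map_add, Finsupp.add_apply, hf, hg]
    simp only [Finsupp.add_apply]
    split_ifs <;> ring
  | single b c =>
    unfold heckeOpX
    rw [Finsupp.linearCombination_single]
    by_cases hab : b = a
    · subst hab
      have key : b ⟨p, by omega⟩ ≠ b ⟨p + 1, hp⟩ → b ≠ swapIdx b p hp := by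
        intro h h2
        have := congrFun h2 ⟨p, by omega⟩
        rw [swapIdx_left] at this
        exact h this
      by_cases h : b ⟨p, by omega⟩ = b ⟨p + 1, hp⟩
      · simp [h]; ring
      · have h1 := key h
        have h2 := h1.symm
        by_cases h3 : b ⟨p, by omega⟩ < b ⟨p + 1, hp⟩
        · simp [h, h3, Finsupp.single_apply, h1, h2]
        · simp [h, h3, Finsupp.single_apply, h1, h2]; ring
    · by_cases hab2 : b = swapIdx a p hp
      · subst hab2
        rw [swapIdx_left, swapIdx_right, swapIdx_swapIdx]
        by_cases h : a ⟨p, by omega⟩ = a ⟨p + 1, hp⟩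
        · exfalso
          apply hab
          funext x
          rw [swapIdx_apply]
          rcases x with ⟨x, hx⟩
          by_cases h1 : x = p + 1
          · subst h1; simp [h]
          · by_cases h2 : x = p
            · subst h2; simp [h]
            · simp [h1, h2]
        · have h' : ¬ a ⟨p + 1, hp⟩ = a ⟨p, by omega⟩ := fun e => h e.symm
          by_cases h3 : a ⟨p, by omega⟩ < a ⟨p + 1, hp⟩
          · simp [h, h', h3, Finsupp.single_apply, hab, h3.le, not_lt_of_gt h3]
          · have h4 : a ⟨p + 1, hp⟩ < a ⟨p, by omega⟩ := lt_of_le_of_ne (not_lt.mp h3) h'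
            simp [h, h', h3, h4, Finsupp.single_apply, hab]
      · have h5 : swapIdx b p hp ≠ a := by
          intro e; apply hab2; rw [← e, swapIdx_swapIdx]
        split_ifs <;> simp [Finsupp.single_apply, hab, hab2, h5]

/-- The four exchange rules. -/
structure GRel {R : Type*} [CommRing R] (q : Rˣ) {n m : ℕ}
    (γ : (Fin m → Fin n) → (Fin m → Fin n) → R) : Prop where
  row : ∀ (p : ℕ) (hp : p + 1 < m) (a b : Fin m → Fin n),
    a ⟨p, by omega⟩ = a ⟨p + 1, hp⟩ → b ⟨p, by omega⟩ < b ⟨p + 1, hp⟩ →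
      γ a b = q * γ a (swapIdx b p hp)
  col : ∀ (p : ℕ) (hp : p + 1 < m) (a b : Fin m → Fin n),
    a ⟨p, by omega⟩ < a ⟨p + 1, hp⟩ → b ⟨p, by omega⟩ = b ⟨p + 1, hp⟩ →
      γ a b = q * γ (swapIdx a p hp) b
  comm : ∀ (p : ℕ) (hp : p + 1 < m) (a b : Fin m → Fin n),
    a ⟨p, by omega⟩ < a ⟨p + 1, hp⟩ → b ⟨p + 1, hp⟩ < b ⟨p, by omega⟩ →
      γ a b = γ (swapIdx a p hp) (swapIdx b p hp)
  qcomm : ∀ (p : ℕ) (hp : p + 1 < m) (a b : Fin m → Fin n),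
    a ⟨p, by omega⟩ < a ⟨p + 1, hp⟩ → b ⟨p, by omega⟩ < b ⟨p + 1, hp⟩ →
      γ a b = γ (swapIdx a p hp) (swapIdx b p hp) +
        ((q : R) - ((q⁻¹ : Rˣ) : R)) * γ a (swapIdx b p hp)

theorem gRel_of_comm {R : Type*} [CommRing R] (q : Rˣ) {n m : ℕ}
    (φ : TSp R n m →ₗ[R] TSp R n m)
    (hφ : ∀ (p : ℕ) (hp : p + 1 < m),
      φ ∘ₗ heckeOpX R q n m p hp = heckeOpX R q n m p hp ∘ₗ φ)
    (γ : (Fin m → Fin n) → (Fin m → Fin n) → R)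
    (hγ : ∀ a b, γ a b = φ (Finsupp.single b 1) a) : GRel q γ := by
  have E : ∀ (p : ℕ) (hp : p + 1 < m) (a b : Fin m → Fin n),
      φ (heckeOpX R q n m p hp (Finsupp.single b 1)) a =
        heckeOpX R q n m p hp (φ (Finsupp.single b 1)) a := by
    intro p hp a b
    exact DFunLike.congr_fun (LinearMap.congr_fun (hφ p hp) (Finsupp.single b 1)) a
  have Easc : ∀ (p : ℕ) (hp : p + 1 < m) (a b : Fin m → Fin n),
      b ⟨p, by omega⟩ < b ⟨p + 1, hp⟩ → γ a (swapIdx b p hp) =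
      if a ⟨p, by omega⟩ = a ⟨p + 1, hp⟩ then ((q⁻¹ : Rˣ) : R) * γ a b
      else if a ⟨p, by omega⟩ < a ⟨p + 1, hp⟩ then γ (swapIdx a p hp) b
      else γ (swapIdx a p hp) b + (((q⁻¹ : Rˣ) : R) - (q : R)) * γ a b := by
    intro p hp a b hb
    have := E p hp a b
    rw [heckeOpX_coeff] at this
    simp only [hγ]
    rw [← this]
    unfold heckeOpX
    rw [Finsupp.linearCombination_single]
    simp [hb, hb.ne]
  have Eeq : ∀ (p : ℕ) (hp : p + 1 < m) (a b : Fin m → Fin n),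
      b ⟨p, by omega⟩ = b ⟨p + 1, hp⟩ → ((q⁻¹ : Rˣ) : R) * γ a b =
      if a ⟨p, by omega⟩ = a ⟨p + 1, hp⟩ then ((q⁻¹ : Rˣ) : R) * γ a b
      else if a ⟨p, by omega⟩ < a ⟨p + 1, hp⟩ then γ (swapIdx a p hp) b
      else γ (swapIdx a p hp) b + (((q⁻¹ : Rˣ) : R) - (q : R)) * γ a b := by
    intro p hp a b hb
    have := E p hp a b
    rw [heckeOpX_coeff] at this
    simp only [hγ]
    rw [← this]
    unfold heckeOpX
    rw [Finsupp.linearCombination_single, if_pos hb, one_smul, map_smul, Finsupp.smul_apply,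
      smul_eq_mul]
  have hcomm : ∀ (p : ℕ) (hp : p + 1 < m) (a b : Fin m → Fin n),
    a ⟨p, by omega⟩ < a ⟨p + 1, hp⟩ → b ⟨p + 1, hp⟩ < b ⟨p, by omega⟩ →
      γ a b = γ (swapIdx a p hp) (swapIdx b p hp) := by
    intro p hp a b ha hb
    have := Easc p hp a (swapIdx b p hp) (by rw [swapIdx_left, swapIdx_right]; exact hb)
    rw [swapIdx_swapIdx] at this
    simpa [ha.ne, ha] using this
  refine ⟨?_, ?_, hcomm, ?_⟩
  · intro p hp a b ha hb
    have := Easc p hp a b hb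
    rw [this, if_pos ha]
    simp
  · intro p hp a b ha hb
    have := Eeq p hp a b hb
    rw [if_neg ha.ne, if_pos ha] at this
    rw [← this]
    simp
  · intro p hp a b ha hb
    have h1 := Easc p hp (swapIdx a p hp) b hb
    have h2 := Easc p hp a b hb
    rw [swapIdx_swapIdx, swapIdx_left, swapIdx_right, if_neg ha.ne', if_neg (not_lt_of_gt ha)] at h1
    rw [if_neg ha.ne, if_pos ha] at h2
    rw [h1, h2]; ring

/-! ### The form on `A_q(n)` -/

/-- list to multi-index -/
def lfn {n : ℕ} [NeZero n] (m : ℕ) (L : List (Fin n)) : Fin m → Fin n := fun t => L.getD t 0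

theorem lfn_left {n : ℕ} [NeZero n] {m : ℕ} (u v : List (Fin n)) (x y : Fin n)
    (h : u.length < m) :
    lfn m (u ++ x :: y :: v) ⟨u.length, h⟩ = x := by
  simp [lfn]

theorem lfn_right {n : ℕ} [NeZero n] {m : ℕ} (u v : List (Fin n)) (x y : Fin n)
    (h : u.length + 1 < m) :
    lfn m (u ++ x :: y :: v) ⟨u.length + 1, h⟩ = y := by
  simp [lfn, List.getElem?_append_right]

theorem lfn_swap {n : ℕ} [NeZero n] {m : ℕ} (u v : List (Fin n)) (x y : Fin n)
    (h : u.length + 1 < m) :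
    swapIdx (lfn m (u ++ x :: y :: v)) u.length h = lfn m (u ++ y :: x :: v) := by
  funext t
  rw [swapIdx_apply, lfn_left, lfn_right]
  rcases t with ⟨t, ht⟩
  by_cases h1 : t = u.length + 1
  · subst h1; simp [lfn_right]
  · by_cases h2 : t = u.length
    · subst h2; simp [lfn_left]
    · simp only [h1, h2, if_false, lfn]
      rcases lt_or_ge t u.length with h3 | h3
      · simp [List.getElem?_append_left, h3]
      · obtain ⟨d, rfl⟩ : ∃ d, t = u.length + (d + 2) := ⟨t - u.length - 2, by omega⟩
        simp [List.getElem?_append_right]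

/-- value on words -/
noncomputable def wval {R : Type*} [CommRing R] {n m : ℕ} [NeZero n]
    (γ : (Fin m → Fin n) → (Fin m → Fin n) → R) (w : List (Fin n × Fin n)) : R :=
  if w.length = m then γ (lfn m (w.map Prod.fst)) (lfn m (w.map Prod.snd)) else 0

theorem wval_rels {R : Type*} [CommRing R] {q : Rˣ} {n m : ℕ} [NeZero n]
    {γ : (Fin m → Fin n) → (Fin m → Fin n) → R} (H : GRel q γ) (u v : List (Fin n × Fin n)) :
    (∀ i j k : Fin n, i < j → wval γ (u ++ (i,k) :: (j,k) :: v) =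
      q * wval γ (u ++ (j,k) :: (i,k) :: v)) ∧
    (∀ k i j : Fin n, i < j → wval γ (u ++ (k,i) :: (k,j) :: v) =
      q * wval γ (u ++ (k,j) :: (k,i) :: v)) ∧
    (∀ i j k l : Fin n, i < k → l < j → wval γ (u ++ (i,j) :: (k,l) :: v) =
      wval γ (u ++ (k,l) :: (i,j) :: v)) ∧
    (∀ i j k l : Fin n, i < k → j < l → wval γ (u ++ (i,j) :: (k,l) :: v) =
      wval γ (u ++ (k,l) :: (i,j) :: v) +
        ((q : R) - ((q⁻¹ : Rˣ) : R)) * wval γ (u ++ (i,l) :: (k,j) :: v)) := by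
  by_cases hm : u.length + (v.length + 1 + 1) = m
  · have e : ∀ x y, (u ++ x :: y :: v).length = m := by intro x y; simpa using hm
    have hp : u.length + 1 < m := by omega
    have hp1 : (u.map Prod.fst).length + 1 < m := by simpa using hp
    have hp2 : (u.map Prod.snd).length + 1 < m := by simpa using hp
    have W : ∀ i j k l, wval γ (u ++ (i,j) :: (k,l) :: v) =
      γ (lfn m (u.map Prod.fst ++ i :: k :: v.map Prod.fst))
        (lfn m (u.map Prod.snd ++ j :: l :: v.map Prod.snd)) := by
      intro i j k l; unfold wval; rw [if_pos (e _ _)]; simp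
    have S1 : ∀ i k, swapIdx (lfn m (u.map Prod.fst ++ i :: k :: v.map Prod.fst)) u.length hp =
        lfn m (u.map Prod.fst ++ k :: i :: v.map Prod.fst) := by
      intro i k
      have := lfn_swap (u.map Prod.fst) (v.map Prod.fst) i k hp1
      rw [← this]
      exact swapIdx_congr _ (by simp) _ _
    have S2 : ∀ i k, swapIdx (lfn m (u.map Prod.snd ++ i :: k :: v.map Prod.snd)) u.length hp =
        lfn m (u.map Prod.snd ++ k :: i :: v.map Prod.snd) := by
      intro i k
      have := lfn_swap (u.map Prod.snd) (v.map Prod.snd) i k hp2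
      rw [← this]
      exact swapIdx_congr _ (by simp) _ _
    have A1 : ∀ i k, lfn m (u.map Prod.fst ++ i :: k :: v.map Prod.fst) ⟨u.length, by omega⟩ = i := by
      intro i k
      have := lfn_left (m := m) (u.map Prod.fst) (v.map Prod.fst) i k (by omega)
      simpa using this
    have A2 : ∀ i k, lfn m (u.map Prod.fst ++ i :: k :: v.map Prod.fst) ⟨u.length + 1, hp⟩ = k := by
      intro i k
      have := lfn_right (m := m) (u.map Prod.fst) (v.map Prod.fst) i k hp1
      simpa using this
    have B1 : ∀ i k, lfn m (u.map Prod.snd ++ i :: k :: v.map Prod.snd) ⟨u.length, by omega⟩ = i := by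
      intro i k
      have := lfn_left (m := m) (u.map Prod.snd) (v.map Prod.snd) i k (by omega)
      simpa using this
    have B2 : ∀ i k, lfn m (u.map Prod.snd ++ i :: k :: v.map Prod.snd) ⟨u.length + 1, hp⟩ = k := by
      intro i k
      have := lfn_right (m := m) (u.map Prod.snd) (v.map Prod.snd) i k hp2
      simpa using this
    refine ⟨?_, ?_, ?_, ?_⟩
    · intro i j k hij
      rw [W, W, H.col u.length hp _ _ (by rw [A1, A2]; exact hij) (by rw [B1, B2]), S1]
    · intro k i j hij
      rw [W, W, H.row u.length hp _ _ (by rw [A1, A2]) (by rw [B1, B2]; exact hij), S2]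
    · intro i j k l h1 h2
      rw [W, W, H.comm u.length hp _ _ (by rw [A1, A2]; exact h1) (by rw [B1, B2]; exact h2), S1, S2]
    · intro i j k l h1 h2
      rw [W, W, W, H.qcomm u.length hp _ _ (by rw [A1, A2]; exact h1) (by rw [B1, B2]; exact h2),
        S1, S2]
  · have e : ∀ x y, wval γ (u ++ x :: y :: v) = 0 := by
      intro x y; unfold wval; rw [if_neg]; simpa using hm
    simp [e]

theorem exists_form {R : Type*} [CommRing R] {q : Rˣ} {n m : ℕ} [NeZero n]
    {γ : (Fin m → Fin n) → (Fin m → Fin n) → R} (H : GRel q γ) :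
    ∃ F : AqAlg R q n →ₗ[R] R, ∀ a b : Fin m → Fin n,
      F (List.ofFn fun u => xq R q n (a u) (b u)).prod = γ a b := by
  classical
  let M := List (Fin n × Fin n) →₀ R
  let L : M →ₗ[R] R := Finsupp.linearCombination R (wval γ)
  let C : List (Fin n × Fin n) → M →ₗ[R] M := fun u => Finsupp.lmapDomain R R (fun w => u ++ w)
  have hC : ∀ u w, C u (Finsupp.single w 1) = Finsupp.single (u ++ w) 1 := by
    intro u w; exact Finsupp.mapDomain_single
  have hL : ∀ w, L (Finsupp.single w 1) = wval γ w := by 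
    intro w
    exact (Finsupp.linearCombination_single R _ _).trans (one_smul _ _)
  have hCC : ∀ u v, C u ∘ₗ C v = C (u ++ v) := by
    intro u v
    apply Finsupp.lhom_ext'
    intro w
    apply LinearMap.ext_ring
    change C u (C v (Finsupp.single w 1)) = C (u ++ v) (Finsupp.single w 1)
    rw [hC, hC, hC, List.append_assoc]
  let N : Submodule R M := ⨅ u, LinearMap.ker (L ∘ₗ C u)
  have hN : ∀ y, y ∈ N ↔ ∀ u, L (C u y) = 0 := by
    intro y; simp [N, Submodule.mem_iInf]
  have hst : ∀ x, N ≤ N.comap (C [x]) := by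
    intro x y hy
    rw [Submodule.mem_comap, hN]
    intro u
    have := (hN y).1 hy (u ++ [x])
    rw [← hCC] at this
    exact this
  let X : Fin n × Fin n → Module.End R (M ⧸ N) := fun x => N.mapQ N (C [x]) (hst x)
  have hX : ∀ x w, X x (N.mkQ (Finsupp.single w 1)) = N.mkQ (Finsupp.single (x :: w) 1) := by
    intro x w
    have := hC [x] w
    simp only [X, Submodule.mkQ_apply, Submodule.mapQ_apply, this]
    rfl
  have ext2 : ∀ f g : Module.End R (M ⧸ N),
      (∀ w, f (N.mkQ (Finsupp.single w 1)) = g (N.mkQ (Finsupp.single w 1))) → f = g := by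
    intro f g h
    apply Submodule.linearMap_qext
    apply Finsupp.lhom_ext'
    intro w
    apply LinearMap.ext_ring
    simpa using h w
  have hmk : ∀ y z : M, (∀ u, L (C u y) = L (C u z)) → N.mkQ y = N.mkQ z := by
    intro y z h
    rw [← sub_eq_zero, ← map_sub, Submodule.mkQ_apply, Submodule.Quotient.mk_eq_zero, hN]
    intro u
    rw [map_sub, map_sub, h u, sub_self]
  let lf := FreeAlgebra.lift R X
  have hlf : ∀ x, lf (FreeAlgebra.ι R x) = X x := fun x => FreeAlgebra.lift_ι_apply _ _
  have hrel : ∀ ⦃x y⦄, QMRel R q n x y → lf x = lf y := by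
    intro x y h
    apply ext2
    intro w
    cases h with
    | col h =>
      simp only [map_mul, map_smul, hlf, Module.End.mul_apply, LinearMap.smul_apply, hX]
      rw [← map_smul]
      apply hmk
      intro u
      simp only [map_smul, hC, hL, smul_eq_mul]
      exact (wval_rels H u w).1 _ _ _ h
    | row h =>
      simp only [map_mul, map_smul, hlf, Module.End.mul_apply, LinearMap.smul_apply, hX]
      rw [← map_smul]
      apply hmk
      intro u
      simp only [map_smul, hC, hL, smul_eq_mul]
      exact (wval_rels H u w).2.1 _ _ _ h
    | comm h1 h2 =>
      simp only [map_mul, hlf, Module.End.mul_apply, hX]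
      apply hmk
      intro u
      simp only [hC, hL]
      exact (wval_rels H u w).2.2.1 _ _ _ _ h1 h2
    | qcomm h1 h2 =>
      simp only [map_mul, map_add, map_smul, hlf, Module.End.mul_apply, LinearMap.smul_apply,
        LinearMap.add_apply, hX]
      rw [← map_smul, ← map_add]
      apply hmk
      intro u
      simp only [map_add, map_smul, hC, hL, smul_eq_mul]
      exact (wval_rels H u w).2.2.2 _ _ _ _ h1 h2
  let act : AqAlg R q n →ₐ[R] Module.End R (M ⧸ N) := RingQuot.liftAlgHom R ⟨lf, hrel⟩
  have hact : ∀ x : Fin n × Fin n, act (xq R q n x.1 x.2) = X x := by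
    intro x
    unfold xq
    rw [RingQuot.liftAlgHom_mkAlgHom_apply]
    exact hlf x
  have hNL : N ≤ LinearMap.ker L := by
    intro y hy
    have := (hN y).1 hy []
    have e : C [] y = y := by
      have : C [] = LinearMap.id := by
        apply Finsupp.lhom_ext'
        intro w
        apply LinearMap.ext_ring
        exact hC [] w
      rw [this]; rfl
    rwa [e] at this
  have hprod : ∀ (g : List (Fin n × Fin n)),
      act ((g.map fun p => xq R q n p.1 p.2).prod) (N.mkQ (Finsupp.single [] 1)) =
        N.mkQ (Finsupp.single g 1) := by
    intro g
    induction g with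
    | nil => simp
    | cons x g ih =>
      rw [List.map_cons, List.prod_cons, map_mul, Module.End.mul_apply, ih, hact, hX]
  refine ⟨N.liftQ L hNL ∘ₗ (LinearMap.applyₗ (N.mkQ (Finsupp.single [] 1))) ∘ₗ act.toLinearMap, ?_⟩
  intro a b
  have e : (List.ofFn fun u => xq R q n (a u) (b u)) =
      (List.ofFn fun u => (a u, b u)).map fun p => xq R q n p.1 p.2 := by
    rw [List.map_ofFn]; rfl
  rw [e]
  simp only [LinearMap.comp_apply, LinearMap.applyₗ_apply_apply, AlgHom.toLinearMap_apply]
  rw [hprod, Submodule.mkQ_apply, Submodule.liftQ_apply, hL]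
  unfold wval
  rw [if_pos (by simp)]
  congr 1
  · funext t; simp [lfn]
  · funext t; simp [lfn]

/-! ### Inversions -/

/-- generic inversion number -/
def ginv {k : ℕ} {α : Type*} [LinearOrder α] (f : Fin k → α) : ℕ :=
  ((Finset.univ : Finset (Fin k × Fin k)).filter
    (fun p => p.1 < p.2 ∧ f p.2 < f p.1)).card

theorem invCount_eq_ginv {k : ℕ} (w : Equiv.Perm (Fin k)) : invCount w = ginv (w : Fin k → Fin k) :=
  rfl

/-- adjacent transposition -/
def adjs {k : ℕ} (u : ℕ) (hu : u + 1 < k) : Equiv.Perm (Fin k) :=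
  Equiv.swap ⟨u, by omega⟩ ⟨u + 1, hu⟩

theorem adjs_val {k : ℕ} (u : ℕ) (hu : u + 1 < k) (x : Fin k) :
    (adjs u hu x : ℕ) = if (x : ℕ) = u then u + 1 else if (x : ℕ) = u + 1 then u else x := by
  unfold adjs
  rw [Equiv.swap_apply_def]
  simp only [Fin.ext_iff]
  split_ifs <;> simp

theorem adjs_left {k : ℕ} (u : ℕ) (hu : u + 1 < k) : adjs u hu ⟨u, by omega⟩ = ⟨u + 1, hu⟩ :=
  Equiv.swap_apply_left _ _

theorem adjs_right {k : ℕ} (u : ℕ) (hu : u + 1 < k) : adjs u hu ⟨u + 1, hu⟩ = ⟨u, by omega⟩ :=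
  Equiv.swap_apply_right _ _

theorem adjs_adjs {k : ℕ} (u : ℕ) (hu : u + 1 < k) (x : Fin k) : adjs u hu (adjs u hu x) = x :=
  Equiv.swap_apply_self _ _ _

theorem adjs_mul_self {k : ℕ} (u : ℕ) (hu : u + 1 < k) : adjs u hu * adjs u hu = 1 :=
  Equiv.swap_mul_self _ _

theorem adjs_lt {k : ℕ} (u : ℕ) (hu : u + 1 < k) (x y : Fin k) (h : x < y)
    (h2 : ¬ (x = ⟨u, by omega⟩ ∧ y = ⟨u + 1, hu⟩)) : adjs u hu x < adjs u hu y := by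
  rw [Fin.lt_def] at h ⊢
  rw [adjs_val, adjs_val]
  simp only [Fin.ext_iff] at h2
  split_ifs <;> omega

theorem ginv_adjs {k : ℕ} {α : Type*} [LinearOrder α] (f : Fin k → α) (u : ℕ) (hu : u + 1 < k)
    (h : f ⟨u + 1, hu⟩ < f ⟨u, by omega⟩) : ginv (f ∘ adjs u hu) + 1 = ginv f := by
  unfold ginv
  have hm : ((⟨u, by omega⟩, ⟨u + 1, hu⟩) : Fin k × Fin k) ∈
      (Finset.univ : Finset (Fin k × Fin k)).filter (fun p => p.1 < p.2 ∧ f p.2 < f p.1) := by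
    simp [h]
  rw [← Finset.card_erase_add_one hm]
  congr 1
  apply Finset.card_nbij' (Prod.map (adjs u hu) (adjs u hu)) (Prod.map (adjs u hu) (adjs u hu))
  · rintro ⟨x, y⟩ hxy
    simp only [Finset.coe_filter, Finset.mem_univ, true_and, Set.mem_ofPred_eq,
      Function.comp] at hxy
    have hne : ¬ (x = ⟨u, by omega⟩ ∧ y = ⟨u + 1, hu⟩) := by
      rintro ⟨e1, e2⟩
      rw [e1, e2, adjs_left, adjs_right] at hxy
      exact absurd hxy.2 (not_lt_of_gt h)
    simp only [Finset.coe_erase, Finset.coe_filter, Finset.mem_univ, true_and, Prod.map,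
      Set.mem_sdiff, Set.mem_ofPred_eq, Set.mem_singleton_iff]
    refine ⟨⟨adjs_lt u hu x y hxy.1 hne, hxy.2⟩, ?_⟩
    intro e
    rw [Prod.mk.injEq] at e
    have e1 := congrArg (adjs u hu) e.1
    have e2 := congrArg (adjs u hu) e.2
    rw [adjs_adjs, adjs_left] at e1
    rw [adjs_adjs, adjs_right] at e2
    have := hxy.1
    rw [e1, e2, Fin.lt_def] at this
    simp at this
  · rintro ⟨x, y⟩ hxy
    simp only [Finset.coe_erase, Finset.coe_filter, Finset.mem_univ, true_and,
      Set.mem_sdiff, Set.mem_ofPred_eq, Set.mem_singleton_iff, Prod.mk.injEq] at hxy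
    simp only [Finset.coe_filter, Finset.mem_univ, true_and, Set.mem_ofPred_eq, Function.comp,
      Prod.map, adjs_adjs]
    exact ⟨adjs_lt u hu x y hxy.1.1 hxy.2, hxy.1.2⟩
  · rintro ⟨x, y⟩ _; simp [adjs_adjs]
  · rintro ⟨x, y⟩ _; simp [adjs_adjs]

theorem strictMono_of_adj {k : ℕ} {α : Type*} [LinearOrder α] (f : Fin k → α)
    (h : ∀ (u : ℕ) (hu : u + 1 < k), f ⟨u, by omega⟩ < f ⟨u + 1, hu⟩) : StrictMono f := by
  cases k with
  | zero => intro x; exact x.elim0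
  | succ k =>
    rw [Fin.strictMono_iff_lt_succ]
    intro i
    exact h i (by omega)

theorem perm_eq_one_or_descent {k : ℕ} (w : Equiv.Perm (Fin k)) :
    w = 1 ∨ ∃ (u : ℕ) (hu : u + 1 < k), w ⟨u + 1, hu⟩ < w ⟨u, by omega⟩ := by
  by_cases h : ∃ (u : ℕ) (hu : u + 1 < k), w ⟨u + 1, hu⟩ < w ⟨u, by omega⟩
  · exact Or.inr h
  · left
    push Not at h
    have hs : StrictMono w := by
      apply strictMono_of_adj
      intro u hu
      refine lt_of_le_of_ne (h u hu) ?_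
      intro e
      have := w.injective e
      simp [Fin.ext_iff] at this
    ext x
    have e : hs.orderIsoOfSurjective _ w.surjective = OrderIso.refl _ := Subsingleton.elim _ _
    have := congrArg (fun e : Fin k ≃o Fin k => e x) e
    simpa using congrArg Fin.val this

theorem invCount_one {k : ℕ} : invCount (1 : Equiv.Perm (Fin k)) = 0 := by
  unfold invCount
  rw [Finset.card_eq_zero, Finset.filter_eq_empty_iff]
  rintro ⟨x, y⟩ _ h
  exact absurd h.1 (not_lt_of_gt h.2)

theorem invCount_inv {k : ℕ} (w : Equiv.Perm (Fin k)) : invCount w⁻¹ = invCount w := by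
  unfold invCount
  apply Finset.card_nbij' (fun p => (w⁻¹ p.2, w⁻¹ p.1)) (fun p => (w p.2, w p.1))
  · rintro ⟨x, y⟩ h
    simp at h ⊢
    exact ⟨h.2, h.1⟩
  · rintro ⟨x, y⟩ h
    simp at h ⊢
    exact ⟨h.2, h.1⟩
  · rintro ⟨x, y⟩ _; simp
  · rintro ⟨x, y⟩ _; simp

theorem invCount_mul_adjs {k : ℕ} (w : Equiv.Perm (Fin k)) (u : ℕ) (hu : u + 1 < k)
    (h : w ⟨u + 1, hu⟩ < w ⟨u, by omega⟩) : invCount (w * adjs u hu) + 1 = invCount w :=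
  ginv_adjs (w : Fin k → Fin k) u hu h

theorem invCount_mul_adjs' {k : ℕ} (w : Equiv.Perm (Fin k)) (u : ℕ) (hu : u + 1 < k)
    (h : w ⟨u, by omega⟩ < w ⟨u + 1, hu⟩) : invCount (w * adjs u hu) = invCount w + 1 := by
  have := invCount_mul_adjs (w * adjs u hu) u hu (by
    rw [Equiv.Perm.mul_apply, Equiv.Perm.mul_apply, adjs_left, adjs_right]; exact h)
  rw [mul_assoc, adjs_mul_self, mul_one] at this
  exact this.symm

/-! ### One block -/

theorem anti_zero {R : Type*} [CommRing R] {k n : ℕ} (F : (Fin k → Fin n) → R) (c : R)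
    (h0 : ∀ (u : ℕ) (hu : u + 1 < k) f, f ⟨u, by omega⟩ = f ⟨u + 1, hu⟩ → F f = 0)
    (h1 : ∀ (u : ℕ) (hu : u + 1 < k) f, f ⟨u, by omega⟩ < f ⟨u + 1, hu⟩ →
      F (f ∘ adjs u hu) = c * F f) (f : Fin k → Fin n) (hf : ¬ Function.Injective f) : F f = 0 := by
  induction hN : ginv f using Nat.strong_induction_on generalizing f with
  | _ N ih =>
    subst hN
    by_cases hd : ∃ (u : ℕ) (hu : u + 1 < k), f ⟨u + 1, hu⟩ < f ⟨u, by omega⟩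
    · obtain ⟨u, hu, hlt⟩ := hd
      have hg := ginv_adjs f u hu hlt
      have hz := ih (ginv (f ∘ adjs u hu)) (by omega) (f ∘ adjs u hu)
        (fun h => hf (by
          have := h.comp (adjs u hu).injective
          have e : (f ∘ adjs u hu) ∘ adjs u hu = f := by
            funext x; simp [adjs_adjs]
          rwa [e] at this)) rfl
      have := h1 u hu (f ∘ adjs u hu) (by
        simp only [Function.comp, adjs_left, adjs_right]; exact hlt)
      have e : (f ∘ adjs u hu) ∘ adjs u hu = f := by
        funext x; simp [adjs_adjs]
      rw [e, hz, mul_zero] at this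
      exact this
    · by_cases he : ∃ (u : ℕ) (hu : u + 1 < k), f ⟨u, by omega⟩ = f ⟨u + 1, hu⟩
      · obtain ⟨u, hu, e⟩ := he
        exact h0 u hu f e
      · exfalso
        push Not at hd he
        exact hf (strictMono_of_adj f (fun u hu => lt_of_le_of_ne (hd u hu) (he u hu))).injective

theorem anti_perm {R : Type*} [CommRing R] {k n : ℕ} (F : (Fin k → Fin n) → R) (c : R)
    (h1 : ∀ (u : ℕ) (hu : u + 1 < k) f, f ⟨u, by omega⟩ < f ⟨u + 1, hu⟩ →
      F (f ∘ adjs u hu) = c * F f) (g : Fin k → Fin n) (hg : StrictMono g)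
    (w : Equiv.Perm (Fin k)) : F (g ∘ w) = c ^ invCount w * F g := by
  induction hN : invCount w using Nat.strong_induction_on generalizing w with
  | _ N ih =>
    subst hN
    rcases perm_eq_one_or_descent w with rfl | ⟨u, hu, hlt⟩
    · simp [invCount_one]
    · have hi := invCount_mul_adjs w u hu hlt
      have hz := ih (invCount (w * adjs u hu)) (by omega) (w * adjs u hu) rfl
      have := h1 u hu (g ∘ (w * adjs u hu : Equiv.Perm (Fin k))) (by
        simp only [Function.comp, Equiv.Perm.mul_apply, adjs_left, adjs_right]
        exact hg hlt)
      have e : (g ∘ (w * adjs u hu : Equiv.Perm (Fin k))) ∘ adjs u hu = g ∘ w := by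
        funext x; simp [adjs_adjs]
      rw [e, hz] at this
      rw [this, ← hi]; ring

theorem pair_perm {R : Type*} {k n : ℕ} (F : (Fin k → Fin n) → (Fin k → Fin n) → R)
    (h1 : ∀ (u : ℕ) (hu : u + 1 < k) f g, f ⟨u, by omega⟩ < f ⟨u + 1, hu⟩ →
      g ⟨u + 1, hu⟩ < g ⟨u, by omega⟩ →
      F f g = F (f ∘ adjs u hu) (g ∘ adjs u hu))
    (f g : Fin k → Fin n) (hf : StrictMono f) (hg : StrictMono g)
    (w x : Equiv.Perm (Fin k)) (hx : ∀ a b, a < b → w b < w a → x a < x b) :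
    F (f ∘ x) (g ∘ w) = F (f ∘ (x * w⁻¹ : Equiv.Perm (Fin k))) g := by
  induction hN : invCount w using Nat.strong_induction_on generalizing w x with
  | _ N ih =>
    subst hN
    rcases perm_eq_one_or_descent w with rfl | ⟨u, hu, hlt⟩
    · simp
    · have hi := invCount_mul_adjs w u hu hlt
      have hz := ih (invCount (w * adjs u hu)) (by omega) (w * adjs u hu) (x * adjs u hu) (by
        intro a b hab h
        simp only [Equiv.Perm.mul_apply] at h ⊢
        have hne : ¬ (a = ⟨u, by omega⟩ ∧ b = ⟨u + 1, hu⟩) := by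
          rintro ⟨e1, e2⟩
          rw [e1, e2, adjs_left, adjs_right] at h
          exact absurd h (not_lt_of_gt hlt)
        exact hx _ _ (adjs_lt u hu a b hab hne) h) rfl
      have := h1 u hu (f ∘ x) (g ∘ w) (hf (hx _ _ (by simp [Fin.lt_def]) hlt)) (hg hlt)
      rw [this]
      have e : x * adjs u hu * (w * adjs u hu)⁻¹ = x * w⁻¹ := by
        rw [mul_inv_rev]; group
      rw [e] at hz
      exact hz

/-! ### Several blocks -/

theorem anti_zero_multi {R : Type*} [CommRing R] {s k n : ℕ} (F : (Fin s → Fin k → Fin n) → R) (c : R)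
    (h0 : ∀ (t : Fin s) (u : ℕ) (hu : u + 1 < k) g, g t ⟨u, by omega⟩ = g t ⟨u + 1, hu⟩ → F g = 0)
    (h1 : ∀ (t : Fin s) (u : ℕ) (hu : u + 1 < k) g, g t ⟨u, by omega⟩ < g t ⟨u + 1, hu⟩ →
      F (Function.update g t (g t ∘ adjs u hu)) = c * F g)
    (g : Fin s → Fin k → Fin n) (t : Fin s) (hg : ¬ Function.Injective (g t)) : F g = 0 := by
  have := anti_zero (fun f => F (Function.update g t f)) c
    (fun u hu f h => h0 t u hu _ (by simpa using h))
    (fun u hu f h => by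
      have := h1 t u hu (Function.update g t f) (by simpa using h)
      simpa using this) (g t) hg
  simpa using this

theorem anti_perm_multi {R : Type*} [CommRing R] {s k n : ℕ} (F : (Fin s → Fin k → Fin n) → R) (c : R)
    (h1 : ∀ (t : Fin s) (u : ℕ) (hu : u + 1 < k) g, g t ⟨u, by omega⟩ < g t ⟨u + 1, hu⟩ →
      F (Function.update g t (g t ∘ adjs u hu)) = c * F g)
    (h : Fin s → Fin k → Fin n) (hh : ∀ t, StrictMono (h t)) (w : Fin s → Equiv.Perm (Fin k)) :
    F (fun t => h t ∘ w t) = c ^ (∑ t, invCount (w t)) * F h := by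
  have key : ∀ T : Finset (Fin s), F (fun t => if t ∈ T then h t ∘ w t else h t) =
      c ^ (∑ t ∈ T, invCount (w t)) * F h := by
    intro T
    induction T using Finset.induction_on with
    | empty => simp
    | insert t T ht ih =>
      have := anti_perm
        (fun f => F (Function.update (fun t => if t ∈ T then h t ∘ w t else h t) t f)) c
        (fun u hu f hl => by
          have := h1 t u hu (Function.update (fun t => if t ∈ T then h t ∘ w t else h t) t f)
            (by simpa using hl)
          simpa using this) (h t) (hh t) (w t)
      have e1 : Function.update (fun t => if t ∈ T then h t ∘ w t else h t) t (h t) =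
          (fun t => if t ∈ T then h t ∘ w t else h t) := by
        apply Function.update_eq_self_iff.2
        simp [ht]
      have e2 : Function.update (fun t => if t ∈ T then h t ∘ w t else h t) t (h t ∘ w t) =
          (fun t' => if t' ∈ insert t T then h t' ∘ w t' else h t') := by
        funext t'
        by_cases e : t' = t
        · subst e; simp
        · simp [e]
      simp only [e1, e2] at this
      rw [this, ih, Finset.sum_insert ht, pow_add, mul_assoc]
  simpa using key Finset.univ

theorem pair_perm_multi {R : Type*} {s k n : ℕ}
    (F : (Fin s → Fin k → Fin n) → (Fin s → Fin k → Fin n) → R)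
    (h1 : ∀ (t : Fin s) (u : ℕ) (hu : u + 1 < k) f g, f t ⟨u, by omega⟩ < f t ⟨u + 1, hu⟩ →
      g t ⟨u + 1, hu⟩ < g t ⟨u, by omega⟩ →
      F f g = F (Function.update f t (f t ∘ adjs u hu)) (Function.update g t (g t ∘ adjs u hu)))
    (h h' : Fin s → Fin k → Fin n) (hh : ∀ t, StrictMono (h t)) (hh' : ∀ t, StrictMono (h' t))
    (w : Fin s → Equiv.Perm (Fin k)) :
    F h (fun t => h' t ∘ w t) = F (fun t => h t ∘ ⇑(w t)⁻¹) h' := by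
  have key : ∀ T : Finset (Fin s), F h (fun t => h' t ∘ w t) =
      F (fun t => if t ∈ T then h t ∘ ⇑(w t)⁻¹ else h t)
        (fun t => if t ∈ T then h' t else h' t ∘ w t) := by
    intro T
    induction T using Finset.induction_on with
    | empty => simp
    | insert t T ht ih =>
      rw [ih]
      have := pair_perm
        (fun f g => F (Function.update (fun t => if t ∈ T then h t ∘ ⇑(w t)⁻¹ else h t) t f)
          (Function.update (fun t => if t ∈ T then h' t else h' t ∘ w t) t g))
        (fun u hu f g hl hl' => by
          have := h1 t u hu
            (Function.update (fun t => if t ∈ T then h t ∘ ⇑(w t)⁻¹ else h t) t f)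
            (Function.update (fun t => if t ∈ T then h' t else h' t ∘ w t) t g)
            (by simpa using hl) (by simpa using hl')
          simpa using this) (h t) (h' t) (hh t) (hh' t) (w t) 1 (by simp +contextual)
      have e1 : Function.update (fun t => if t ∈ T then h t ∘ ⇑(w t)⁻¹ else h t) t (h t) =
          (fun t => if t ∈ T then h t ∘ ⇑(w t)⁻¹ else h t) := by
        apply Function.update_eq_self_iff.2
        simp [ht]
      have e2 : Function.update (fun t => if t ∈ T then h t ∘ ⇑(w t)⁻¹ else h t) t (h t ∘ ⇑(w t)⁻¹) =
          (fun t' => if t' ∈ insert t T then h t' ∘ ⇑(w t')⁻¹ else h t') := by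
        funext t'
        by_cases e : t' = t
        · subst e; simp
        · simp [e]
      have e3 : Function.update (fun t => if t ∈ T then h' t else h' t ∘ w t) t (h' t ∘ w t) =
          (fun t => if t ∈ T then h' t else h' t ∘ w t) := by
        apply Function.update_eq_self_iff.2
        simp [ht]
      have e4 : Function.update (fun t => if t ∈ T then h' t else h' t ∘ w t) t (h' t) =
          (fun t' => if t' ∈ insert t T then h' t' else h' t' ∘ w t') := by
        funext t'
        by_cases e : t' = t
        · subst e; simp
        · simp [e]
      rw [one_mul] at this
      simp only [Equiv.Perm.coe_one, Function.comp_id, e1, e2, e3, e4] at this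
      exact this
  simpa using key Finset.univ

/-! ### `omitIdx` and `catIdx` -/

theorem omitIdx_val {n : ℕ} (i : Fin n) (t : Fin (n - 1)) :
    (omitIdx i t : ℕ) = if (t : ℕ) < (i : ℕ) then (t : ℕ) else (t : ℕ) + 1 := by
  unfold omitIdx; split_ifs <;> rfl

theorem omitIdx_strictMono {n : ℕ} (i : Fin n) : StrictMono (omitIdx i) := by
  intro a b h
  rw [Fin.lt_def] at h ⊢
  rw [omitIdx_val, omitIdx_val]
  split_ifs <;> omega

theorem omitIdx_ne {n : ℕ} (i : Fin n) (t : Fin (n - 1)) : omitIdx i t ≠ i := by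
  intro h
  have := congrArg Fin.val h
  rw [omitIdx_val] at this
  split_ifs at this <;> omega

theorem omitIdx_surj {n : ℕ} (i x : Fin n) (h : x ≠ i) : ∃ t, omitIdx i t = x := by
  have h' : (x : ℕ) ≠ (i : ℕ) := fun e => h (Fin.ext e)
  have hx := x.2
  have hi := i.2
  by_cases hl : (x : ℕ) < i
  · refine ⟨⟨x, by omega⟩, Fin.ext ?_⟩
    rw [omitIdx_val]; simp [hl]
  · refine ⟨⟨(x : ℕ) - 1, by omega⟩, Fin.ext ?_⟩
    rw [omitIdx_val]
    simp only
    split_ifs <;> omega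

theorem omit_comp_inj {n : ℕ} {j j' : Fin n} {w w' : Equiv.Perm (Fin (n - 1))}
    (h : (omitIdx j ∘ w) = omitIdx j' ∘ w') : j = j' ∧ w = w' := by
  have hj : j = j' := by
    by_contra hne
    obtain ⟨t, ht⟩ := omitIdx_surj j j' (fun e => hne e.symm)
    obtain ⟨x, rfl⟩ := w.surjective t
    have := congrFun h x
    simp only [Function.comp, ht] at this
    exact omitIdx_ne _ _ this.symm
  subst hj
  refine ⟨rfl, ?_⟩
  ext x
  exact congrArg Fin.val ((omitIdx_strictMono j).injective (congrFun h x))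

theorem exists_omit_comp {n : ℕ} (hn : 0 < n) (f : Fin (n - 1) → Fin n)
    (hf : Function.Injective f) :
    ∃ (j : Fin n) (w : Equiv.Perm (Fin (n - 1))), f = omitIdx j ∘ w := by
  have hns : ¬ Function.Surjective f := by
    intro hs
    have := Fintype.card_le_of_surjective f hs
    simp at this
    omega
  simp only [Function.Surjective, not_forall, not_exists] at hns
  obtain ⟨j, hj⟩ := hns
  choose w hw using fun x => omitIdx_surj j (f x) (hj x)
  have hwi : Function.Injective w := by
    intro a b h
    apply hf
    rw [← hw a, ← hw b, h]
  refine ⟨j, Equiv.ofBijective w (Finite.injective_iff_bijective.1 hwi), ?_⟩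
  funext x
  simp [hw]

theorem pos_lt {n r s : ℕ} (t : Fin s) (u : Fin (n - 1)) :
    r + ((n - 1) * (t : ℕ) + u) < r + (n - 1) * s := by
  have h1 := t.2
  have h2 := u.2
  have : (n - 1) * ((t : ℕ) + 1) ≤ (n - 1) * s := Nat.mul_le_mul_left _ h1
  rw [Nat.mul_add] at this
  omega

theorem cat_left {n : ℕ} [NeZero n] {r s : ℕ} (k : Fin r → Fin n) (g : Fin s → Fin (n - 1) → Fin n)
    (p : Fin r) (h : (p : ℕ) < r + (n - 1) * s) : catIdx k g ⟨p, h⟩ = k p := by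
  unfold catIdx; simp

theorem cat_right {n : ℕ} [NeZero n] {r s : ℕ} (k : Fin r → Fin n) (g : Fin s → Fin (n - 1) → Fin n)
    (t : Fin s) (u : Fin (n - 1)) (p : ℕ) (hp : p < r + (n - 1) * s)
    (e : p = r + ((n - 1) * (t : ℕ) + u)) :
    catIdx k g ⟨p, hp⟩ = g t u := by
  subst e
  have hu := u.2
  have h0 : 0 < n - 1 := by omega
  unfold catIdx
  rw [dif_neg (by simp), dif_pos h0]
  have e1 : (r + ((n - 1) * (t : ℕ) + u) - r) / (n - 1) = t := by
    rw [Nat.add_sub_cancel_left, Nat.mul_add_div h0, Nat.div_eq_of_lt hu]; simp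
  have e2 : (r + ((n - 1) * (t : ℕ) + u) - r) % (n - 1) = u := by
    rw [Nat.add_sub_cancel_left, Nat.mul_add_mod, Nat.mod_eq_of_lt hu]
  exact congrArg₂ g (Fin.ext e1) (Fin.ext e2)

theorem pos_cases {n r s : ℕ} (p : ℕ) (hp : p < r + (n - 1) * s) :
    p < r ∨ ∃ (t : Fin s) (u : Fin (n - 1)), p = r + ((n - 1) * (t : ℕ) + u) := by
  by_cases h : p < r
  · exact Or.inl h
  · right
    have h0 : 0 < n - 1 := by
      rcases Nat.eq_zero_or_pos (n - 1) with e | e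
      · rw [e] at hp; omega
      · exact e
    refine ⟨⟨(p - r) / (n - 1), Nat.div_lt_of_lt_mul (by omega)⟩,
      ⟨(p - r) % (n - 1), Nat.mod_lt _ h0⟩, ?_⟩
    simp only
    rw [Nat.div_add_mod]; omega

theorem cat_surj {n : ℕ} [NeZero n] {r s : ℕ} (a : Fin (r + (n - 1) * s) → Fin n) :
    ∃ i g, a = catIdx i g := by
  refine ⟨fun p => a ⟨p, by have := p.2; omega⟩,
    fun t u => a ⟨r + ((n - 1) * (t : ℕ) + u), pos_lt t u⟩, ?_⟩
  funext ⟨p, hp⟩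
  rcases pos_cases p hp with h | ⟨t, u, h⟩
  · rw [cat_left _ _ ⟨p, h⟩ hp]
  · rw [cat_right _ _ t u p hp h]
    congr 1; ext; exact h

theorem cat_inj {n : ℕ} [NeZero n] {r s : ℕ} {i i' : Fin r → Fin n}
    {g g' : Fin s → Fin (n - 1) → Fin n} (h : catIdx i g = catIdx i' g') : i = i' ∧ g = g' := by
  constructor
  · funext p
    have hp : (p : ℕ) < r + (n - 1) * s := by have := p.2; omega
    have := congrFun h ⟨p, hp⟩
    rwa [cat_left, cat_left] at this
  · funext t u
    have := congrFun h ⟨_, pos_lt t u⟩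
    rwa [cat_right _ _ t u _ _ rfl, cat_right _ _ t u _ _ rfl] at this

theorem pos_lt' {n r s : ℕ} (t : Fin s) (u : ℕ) (hu : u + 1 < n - 1) :
    r + ((n - 1) * (t : ℕ) + u) + 1 < r + (n - 1) * s :=
  pos_lt (r := r) t ⟨u + 1, hu⟩

theorem cat_succ {n : ℕ} [NeZero n] {r s : ℕ} (k : Fin r → Fin n)
    (g : Fin s → Fin (n - 1) → Fin n) (t : Fin s) (u : ℕ) (hu : u + 1 < n - 1)
    (hp : r + ((n - 1) * (t : ℕ) + u) + 1 < r + (n - 1) * s) :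
    catIdx k g ⟨r + ((n - 1) * (t : ℕ) + u) + 1, hp⟩ = g t ⟨u + 1, hu⟩ :=
  cat_right k g t ⟨u + 1, hu⟩ _ hp rfl

theorem cat_swap {n : ℕ} [NeZero n] {r s : ℕ} (i : Fin r → Fin n)
    (g : Fin s → Fin (n - 1) → Fin n) (t : Fin s) (u : ℕ) (hu : u + 1 < n - 1) :
    swapIdx (catIdx i g) (r + ((n - 1) * (t : ℕ) + u)) (pos_lt' t u hu) =
      catIdx i (Function.update g t (g t ∘ adjs u hu)) := by
  funext ⟨p, hp⟩
  rw [swapIdx_apply, cat_right i g t ⟨u, by omega⟩ _ _ rfl, cat_succ i g t u hu]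
  simp only
  rcases pos_cases p hp with h | ⟨t', u', h⟩
  · rw [if_neg (by omega), if_neg (by omega), cat_left _ _ ⟨p, h⟩ hp, cat_left _ _ ⟨p, h⟩ hp]
  · rw [cat_right _ _ t' u' p hp h, cat_right _ _ t' u' p hp h]
    by_cases ht : t' = t
    · subst ht
      rw [Function.update_self, Function.comp]
      have hv := adjs_val u hu u'
      by_cases h1 : (u' : ℕ) = u + 1
      · rw [if_pos (by omega)]
        congr 1; ext; rw [hv]; simp [h1]
      · by_cases h2 : (u' : ℕ) = u
        · rw [if_neg (by omega), if_pos (by omega)]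
          congr 1; ext; rw [hv]; simp [h2]
        · rw [if_neg (by omega), if_neg (by omega)]
          congr 1; ext; rw [hv]; simp [h1, h2]
    · rw [Function.update_of_ne ht]
      have hne : ∀ v : ℕ, v < n - 1 → p ≠ r + ((n - 1) * (t : ℕ) + v) := by
        intro v hv e
        have h3 : (n - 1) * (t' : ℕ) + u' = (n - 1) * (t : ℕ) + v := by omega
        have h4 := congrArg (fun x => x / (n - 1)) h3
        have hu' := u'.2
        rw [Nat.mul_add_div (by omega), Nat.mul_add_div (by omega), Nat.div_eq_of_lt hu',
          Nat.div_eq_of_lt hv] at h4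
        exact ht (Fin.ext (by simpa using h4))
      rw [if_neg, if_neg (hne u (by omega))]
      have := hne (u + 1) hu
      omega

/-! ### The antisymmetrised coefficients -/

theorem sum_pair {W R : Type*} [Fintype W] [AddCommMonoid R] (P : W → Prop)
    [DecidablePred P] (τ : W → W) (hτ : ∀ w, τ (τ w) = w) (hP : ∀ w, P (τ w) ↔ ¬ P w) (f : W → R) :
    ∑ w, f w = ∑ w ∈ Finset.univ.filter P, (f w + f (τ w)) := by
  rw [← Finset.sum_filter_add_sum_filter_not Finset.univ P f, Finset.sum_add_distrib]
  congr 1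
  apply Finset.sum_nbij' τ τ
  · intro w hw
    simp only [Finset.mem_filter, Finset.mem_univ, true_and] at hw ⊢
    exact (hP w).2 hw
  · intro w hw
    simp only [Finset.mem_filter, Finset.mem_univ, true_and] at hw ⊢
    rw [hP]; exact not_not.2 hw
  · intro w _; exact hτ w
  · intro w _; exact hτ w
  · intro w _; rw [hτ]

/-- `Σ_w (−q)^{ℓ(w)} γ(cat i g, cat k (omit l ∘ w))` -/
noncomputable def FL {R : Type*} [CommRing R] (q : Rˣ) {n : ℕ} [NeZero n] {r s : ℕ}
    (γ : (Fin (r + (n - 1) * s) → Fin n) → (Fin (r + (n - 1) * s) → Fin n) → R)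
    (k : Fin r → Fin n) (l : Fin s → Fin n) (i : Fin r → Fin n)
    (g : Fin s → Fin (n - 1) → Fin n) : R :=
  ∑ w : Fin s → Equiv.Perm (Fin (n - 1)), (-(q : R)) ^ (∑ t, invCount (w t)) *
    γ (catIdx i g) (catIdx k (fun t => omitIdx (l t) ∘ w t))

section FLsec

variable {R : Type*} [CommRing R] {q : Rˣ} {n : ℕ} [NeZero n] {r s : ℕ}
    {γ : (Fin (r + (n - 1) * s) → Fin n) → (Fin (r + (n - 1) * s) → Fin n) → R}

theorem FL_pair (k : Fin r → Fin n) (l : Fin s → Fin n) (i : Fin r → Fin n)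
    (g : Fin s → Fin (n - 1) → Fin n) (t : Fin s) (u : ℕ) (hu : u + 1 < n - 1) :
    FL q γ k l i g = ∑ w ∈ (Finset.univ : Finset (Fin s → Equiv.Perm (Fin (n - 1)))).filter
        (fun w => w t ⟨u, by omega⟩ < w t ⟨u + 1, hu⟩),
      (-(q : R)) ^ (∑ t, invCount (w t)) *
        (γ (catIdx i g) (catIdx k (fun t => omitIdx (l t) ∘ w t)) -
          q * γ (catIdx i g) (swapIdx (catIdx k (fun t => omitIdx (l t) ∘ w t))
            (r + ((n - 1) * (t : ℕ) + u)) (pos_lt' t u hu))) := by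
  unfold FL
  rw [sum_pair (fun w : Fin s → Equiv.Perm (Fin (n - 1)) => w t ⟨u, by omega⟩ < w t ⟨u + 1, hu⟩)
    (fun w => Function.update w t (w t * adjs u hu))]
  · apply Finset.sum_congr rfl
    intro w hw
    simp only [Finset.mem_filter, Finset.mem_univ, true_and] at hw
    rw [cat_swap _ _ t u hu]
    have e1 : (Function.update (fun t => omitIdx (l t) ∘ w t) t ((omitIdx (l t) ∘ w t) ∘ adjs u hu))
        = (fun t' => omitIdx (l t') ∘ Function.update w t (w t * adjs u hu) t') := by
      funext t'
      by_cases e : t' = t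
      · subst e; simp; rfl
      · simp [e]
    have e2 : ∑ t', invCount (Function.update w t (w t * adjs u hu) t') =
        (∑ t', invCount (w t')) + 1 := by
      rw [← Finset.add_sum_erase _ _ (Finset.mem_univ t),
        ← Finset.add_sum_erase _ (fun t' => invCount (w t')) (Finset.mem_univ t),
        Function.update_self, invCount_mul_adjs' _ u hu hw]
      rw [Finset.sum_congr rfl (g := fun t' => invCount (w t'))]
      · ring
      · intro x hx
        rw [Function.update_of_ne (Finset.ne_of_mem_erase hx)]
    rw [e1, e2]
    ring
  · intro w
    funext t'
    by_cases e : t' = t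
    · subst e; simp [mul_assoc, adjs_mul_self]
    · simp [e]
  · intro w
    simp only [Function.update_self, Equiv.Perm.mul_apply, adjs_left, adjs_right, not_lt]
    constructor
    · exact le_of_lt
    · intro h
      refine lt_of_le_of_ne h ?_
      intro e
      have := (w t).injective e
      simp [Fin.ext_iff] at this

theorem FL_h0 (H : GRel q γ) (k : Fin r → Fin n) (l : Fin s → Fin n) (i : Fin r → Fin n)
    (t : Fin s) (u : ℕ) (hu : u + 1 < n - 1) (g : Fin s → Fin (n - 1) → Fin n)
    (h : g t ⟨u, by omega⟩ = g t ⟨u + 1, hu⟩) : FL q γ k l i g = 0 := by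
  rw [FL_pair k l i g t u hu]
  apply Finset.sum_eq_zero
  intro w hw
  simp only [Finset.mem_filter, Finset.mem_univ, true_and] at hw
  rw [H.row _ (pos_lt' t u hu) (catIdx i g)]
  · ring
  · rw [cat_right i g t ⟨u, by omega⟩ _ _ rfl, cat_succ i g t u hu, h]
  · rw [cat_right k _ t ⟨u, by omega⟩ _ _ rfl, cat_succ k _ t u hu]
    exact omitIdx_strictMono _ hw

theorem FL_h1 (H : GRel q γ) (k : Fin r → Fin n) (l : Fin s → Fin n) (i : Fin r → Fin n)
    (t : Fin s) (u : ℕ) (hu : u + 1 < n - 1) (g : Fin s → Fin (n - 1) → Fin n)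
    (h : g t ⟨u, by omega⟩ < g t ⟨u + 1, hu⟩) :
    FL q γ k l i (Function.update g t (g t ∘ adjs u hu)) = -(q : R) * FL q γ k l i g := by
  rw [FL_pair k l i g t u hu, FL_pair k l i _ t u hu, Finset.mul_sum]
  apply Finset.sum_congr rfl
  intro w hw
  simp only [Finset.mem_filter, Finset.mem_univ, true_and] at hw
  rw [← cat_swap]
  have ha : catIdx i g ⟨r + ((n - 1) * (t : ℕ) + u), by have := pos_lt' (r := r) t u hu; omega⟩ <
      catIdx i g ⟨_, pos_lt' t u hu⟩ := by
    rw [cat_right i g t ⟨u, by omega⟩ _ _ rfl, cat_succ i g t u hu]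
    exact h
  have hb : catIdx k (fun t => omitIdx (l t) ∘ w t)
        ⟨r + ((n - 1) * (t : ℕ) + u), by have := pos_lt' (r := r) t u hu; omega⟩ <
      catIdx k (fun t => omitIdx (l t) ∘ w t) ⟨_, pos_lt' t u hu⟩ := by
    rw [cat_right k _ t ⟨u, by omega⟩ _ _ rfl, cat_succ k _ t u hu]
    exact omitIdx_strictMono _ hw
  have h1 := H.qcomm _ (pos_lt' t u hu) _ _ ha hb
  have h2 := H.comm _ (pos_lt' t u hu) (catIdx i g)
    (swapIdx (catIdx k (fun t => omitIdx (l t) ∘ w t)) _ (pos_lt' t u hu)) ha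
    (by rw [swapIdx_left, swapIdx_right]; exact hb)
  rw [swapIdx_swapIdx] at h2
  rw [h1, ← h2]
  have hq : (q : R) * ((q⁻¹ : Rˣ) : R) = 1 := by simp
  linear_combination (-(q : R)) ^ (∑ t, invCount (w t)) *
    (γ (catIdx i g) (swapIdx (catIdx k (fun t => omitIdx (l t) ∘ w t)) _ (pos_lt' t u hu))) * (-hq)

theorem FL_zero (H : GRel q γ) (k : Fin r → Fin n) (l : Fin s → Fin n) (i : Fin r → Fin n)
    (g : Fin s → Fin (n - 1) → Fin n) (t : Fin s) (hg : ¬ Function.Injective (g t)) :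
    FL q γ k l i g = 0 :=
  anti_zero_multi (FL q γ k l i) (-(q : R)) (FL_h0 H k l i) (FL_h1 H k l i) g t hg

theorem FL_perm (H : GRel q γ) (k : Fin r → Fin n) (l : Fin s → Fin n) (i : Fin r → Fin n)
    (j : Fin s → Fin n) (w : Fin s → Equiv.Perm (Fin (n - 1))) :
    FL q γ k l i (fun t => omitIdx (j t) ∘ w t) =
      (-(q : R)) ^ (∑ t, invCount (w t)) * FL q γ k l i (fun t => omitIdx (j t)) :=
  anti_perm_multi (FL q γ k l i) (-(q : R)) (FL_h1 H k l i) (fun t => omitIdx (j t))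
    (fun _ => omitIdx_strictMono _) w

theorem FL_eq (H : GRel q γ) (k : Fin r → Fin n) (l : Fin s → Fin n) (i : Fin r → Fin n)
    (j : Fin s → Fin n) :
    FL q γ k l i (fun t => omitIdx (j t)) =
      ∑ w : Fin s → Equiv.Perm (Fin (n - 1)), (-(q : R)) ^ (∑ t, invCount (w t)) *
        γ (catIdx i (fun t => omitIdx (j t) ∘ w t)) (catIdx k (fun t => omitIdx (l t))) := by
  unfold FL
  rw [← Equiv.sum_comp (Equiv.inv (Fin s → Equiv.Perm (Fin (n - 1))))]
  apply Finset.sum_congr rfl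
  intro w _
  simp only [Equiv.inv_apply, Pi.inv_apply, invCount_inv]
  congr 1
  have := pair_perm_multi (fun a b => γ (catIdx i a) (catIdx k b)) (by
    intro t u hu f g hf hg
    rw [← cat_swap, ← cat_swap]
    apply H.comm
    · rw [cat_right i f t ⟨u, by omega⟩ _ _ rfl, cat_succ i f t u hu]; exact hf
    · rw [cat_right k g t ⟨u, by omega⟩ _ _ rfl, cat_succ k g t u hu]; exact hg)
    (fun t => omitIdx (j t)) (fun t => omitIdx (l t)) (fun _ => omitIdx_strictMono _)
    (fun _ => omitIdx_strictMono _) (fun t => (w t)⁻¹)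
  simpa using this

end FLsec

/-! ### Expanding `ι̂` -/

theorem ofFn_prod_sum {R A α : Type*} [CommRing R] [Ring A] [Algebra R A] [Fintype α] {s : ℕ}
    (c : Fin s → α → R) (P : Fin s → α → A) :
    (List.ofFn fun t => ∑ w, c t w • P t w).prod =
      ∑ w : Fin s → α, (∏ t, c t (w t)) • (List.ofFn fun t => P t (w t)).prod := by
  induction s with
  | zero => simp
  | succ s ih =>
    rw [List.ofFn_succ, List.prod_cons, ih, Finset.sum_mul_sum,
      ← Equiv.sum_comp (Fin.consEquiv (fun _ : Fin (s + 1) => α)), Fintype.sum_prod_type]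
    apply Finset.sum_congr rfl
    intro x _
    apply Finset.sum_congr rfl
    intro w _
    simp [Fin.consEquiv, List.ofFn_succ, Fin.prod_univ_succ, smul_smul]
    rw [mul_comm]

theorem cat_prod {A : Type*} [Monoid A] {n : ℕ} [NeZero n] {r s : ℕ} (x : Fin n → Fin n → A)
    (i k : Fin r → Fin n) (g h : Fin s → Fin (n - 1) → Fin n) :
    (List.ofFn fun p => x (catIdx i g p) (catIdx k h p)).prod =
      (List.ofFn fun u => x (i u) (k u)).prod *
        (List.ofFn fun t => (List.ofFn fun u => x (g t u) (h t u)).prod).prod := by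
  rw [List.ofFn_add, List.prod_append, List.ofFn_mul', List.prod_flatten, List.map_ofFn]
  congr 1
  · congr 2
    funext u
    have hu : (u : ℕ) < r + (n - 1) * s := by have := u.2; omega
    have e1 := cat_left i g u hu
    have e2 := cat_left k h u hu
    rw [← e1, ← e2]; rfl
  · congr 2
    funext t
    simp only [Function.comp]
    congr 2
    funext u
    have e1 := cat_right i g t u _ (pos_lt t u) rfl
    have e2 := cat_right k h t u _ (pos_lt t u) rfl
    rw [← e1, ← e2]; rfl

theorem iotaHat_mixed {R : Type*} [CommRing R] {q : Rˣ} {n : ℕ} [NeZero n] {r s : ℕ}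
    (i k : Fin r → Fin n) (j l : Fin s → Fin n) :
    iotaHat R q n (mixedMono R n i k j l) =
      ∑ w : Fin s → Equiv.Perm (Fin (n - 1)),
        ((((∏ t, (-q) ^ ((l t : ℤ) - (j t : ℤ))) : Rˣ) : R) *
          (-(q : R)) ^ (∑ t, invCount (w t))) •
          (List.ofFn fun p => xq R q n (catIdx i (fun t => omitIdx (j t) ∘ w t) p)
            (catIdx k (fun t => omitIdx (l t)) p)).prod := by
  have e1 : ∀ a b, iotaHat R q n (Xg R n a b) = xq R q n a b := by
    intro a b; unfold iotaHat Xg; rw [FreeAlgebra.lift_ι_apply]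
  have e2 : ∀ a b, iotaHat R q n (Xs R n a b) =
      ∑ w : Equiv.Perm (Fin (n - 1)),
        ((((-q) ^ ((b : ℤ) - (a : ℤ)) : Rˣ) : R) * (-(q : R)) ^ invCount w) •
        (List.ofFn fun t => xq R q n (omitIdx a (w t)) (omitIdx b t)).prod := by
    intro a b; unfold iotaHat Xs; rw [FreeAlgebra.lift_ι_apply]
    simp only [compMinor, qMinorR, oprod, Finset.smul_sum, smul_smul]
    apply Finset.sum_congr rfl
    intro w _
    simp
  unfold mixedMono
  rw [map_mul, map_list_prod, map_list_prod, List.map_ofFn, List.map_ofFn]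
  have f1 : (⇑(iotaHat R q n) ∘ fun u => Xg R n (i u) (k u)) = fun u => xq R q n (i u) (k u) := by
    funext u; exact e1 _ _
  have f2 : (⇑(iotaHat R q n) ∘ fun u => Xs R n (j u) (l u)) = fun u =>
      ∑ w : Equiv.Perm (Fin (n - 1)),
        ((((-q) ^ ((l u : ℤ) - (j u : ℤ)) : Rˣ) : R) * (-(q : R)) ^ invCount w) •
        (List.ofFn fun t => xq R q n (omitIdx (j u) (w t)) (omitIdx (l u) t)).prod := by
    funext u; exact e2 _ _
  rw [f1, f2, ofFn_prod_sum
    (fun u w => (((-q) ^ ((l u : ℤ) - (j u : ℤ)) : Rˣ) : R) * (-(q : R)) ^ invCount w)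
    (fun u (w : Equiv.Perm (Fin (n - 1))) =>
      (List.ofFn fun t => xq R q n (omitIdx (j u) (w t)) (omitIdx (l u) t)).prod), Finset.mul_sum]
  apply Finset.sum_congr rfl
  intro w _
  rw [cat_prod, mul_smul_comm, Finset.prod_mul_distrib, Finset.prod_pow_eq_pow_sum,
    Units.coe_prod]
  rfl

theorem kappa_single {R : Type*} [CommRing R] {q : Rˣ} {n : ℕ} [NeZero n] {r s : ℕ}
    (k : Fin r → Fin n) (l : Fin s → Fin n) :
    kappaHat R q n r s (Finsupp.single (k, l) 1) =
      (-(q : R)) ^ (∑ t, ((l t : ℕ) + 1)) •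
      ∑ w : Fin s → Equiv.Perm (Fin (n - 1)), (-(q : R)) ^ (∑ t, invCount (w t)) •
          Finsupp.single (catIdx k (fun t => omitIdx (l t) ∘ w t)) 1 := by
  unfold kappaHat
  rw [Finsupp.linearCombination_single, one_smul]
  simp
  rfl

end helpers

/-- if `φ ∈ End_R(V^{⊗m})` (`m = r+(n−1)s`) commutes with all
Hecke operators `S_t` and has matrix coefficients `γ`, then (i) the linear
form `x_{s_1t_1}⋯x_{s_mt_m} ↦ γ(s,t)` descends to a well-defined form `φ̃` on
`A_q(n,m)`; (ii) `φ` preserves the image of `κ̂`; (iii)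
`φ(κ̂(v_{k|l})) = Σ_{i,j} φ̃(ι(x_{i_1k_1}⋯x_{i_rk_r}x*_{j_1l_1}⋯x*_{j_sl_s}))·κ̂(v_{i|j})`. -/
theorem stmt9 (R : Type*) [CommRing R] (q : Rˣ) (n : ℕ) [NeZero n] (r s : ℕ)
    (φ : TSp R n (r + (n - 1) * s) →ₗ[R] TSp R n (r + (n - 1) * s))
    (hφ : ∀ (p : ℕ) (hp : p + 1 < r + (n - 1) * s),
      φ ∘ₗ heckeOpX R q n (r + (n - 1) * s) p hp =
        heckeOpX R q n (r + (n - 1) * s) p hp ∘ₗ φ)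
    (γ : (Fin (r + (n - 1) * s) → Fin n) → (Fin (r + (n - 1) * s) → Fin n) → R)
    (hγ : ∀ a b, γ a b = φ (Finsupp.single b 1) a)
    (hmem : ∀ (i k : Fin r → Fin n) (j l : Fin s → Fin n),
      iotaHat R q n (mixedMono R n i k j l) ∈ AqDeg R q n (r + (n - 1) * s)) :
    ∃ φt : ↥(AqDeg R q n (r + (n - 1) * s)) →ₗ[R] R,
      (∀ (a b : Fin (r + (n - 1) * s) → Fin n)
        (h : (List.ofFn fun u => xq R q n (a u) (b u)).prod ∈ AqDeg R q n (r + (n - 1) * s)),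
        φt ⟨(List.ofFn fun u => xq R q n (a u) (b u)).prod, h⟩ = γ a b) ∧
      (∀ z ∈ LinearMap.range (kappaHat R q n r s),
        φ z ∈ LinearMap.range (kappaHat R q n r s)) ∧
      (∀ (k : Fin r → Fin n) (l : Fin s → Fin n),
        φ (kappaHat R q n r s (Finsupp.single (k, l) 1)) =
          ∑ i : Fin r → Fin n, ∑ j : Fin s → Fin n,
            φt ⟨iotaHat R q n (mixedMono R n i k j l), hmem i k j l⟩ •
              kappaHat R q n r s (Finsupp.single (i, j) 1)) := by
  have H : GRel q γ := gRel_of_comm q φ hφ γ hγ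
  obtain ⟨F, hF⟩ := exists_form H
  have main : ∀ (k : Fin r → Fin n) (l : Fin s → Fin n),
        φ (kappaHat R q n r s (Finsupp.single (k, l) 1)) =
          ∑ i : Fin r → Fin n, ∑ j : Fin s → Fin n,
            F (iotaHat R q n (mixedMono R n i k j l)) •
              kappaHat R q n r s (Finsupp.single (i, j) 1) := by
    intro k l
    have hval : ∀ i j, F (iotaHat R q n (mixedMono R n i k j l)) *
        (-(q : R)) ^ (∑ t, ((j t : ℕ) + 1)) =
        (-(q : R)) ^ (∑ t, ((l t : ℕ) + 1)) * FL q γ k l i (fun t => omitIdx (j t)) := by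
      intro i j
      rw [iotaHat_mixed, map_sum, FL_eq H]
      simp only [map_smul, hF, smul_eq_mul, mul_assoc]
      rw [← Finset.mul_sum, mul_right_comm]
      congr 1
      have : (∏ t, (-q) ^ ((l t : ℤ) - (j t : ℤ))) * (-q) ^ (∑ t, ((j t : ℕ) + 1)) =
          (-q) ^ (∑ t, ((l t : ℕ) + 1)) := by
        rw [← Finset.prod_pow_eq_pow_sum, ← Finset.prod_pow_eq_pow_sum, ← Finset.prod_mul_distrib]
        apply Finset.prod_congr rfl
        intro t _
        rw [← zpow_natCast, ← zpow_natCast, ← zpow_add]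
        congr 1
        push_cast
        ring
      have := congrArg (Units.val) this
      simpa using this
    have hind : ∀ (i : Fin r → Fin n) (j : Fin s → Fin n) a,
        kappaHat R q n r s (Finsupp.single (i, j) 1) a =
        (-(q : R)) ^ (∑ t, ((j t : ℕ) + 1)) *
          ∑ w : Fin s → Equiv.Perm (Fin (n - 1)), (-(q : R)) ^ (∑ t, invCount (w t)) *
            (if catIdx i (fun t => omitIdx (j t) ∘ w t) = a then 1 else 0) := by
      intro i j a
      rw [kappa_single, Finsupp.smul_apply, Finsupp.finsetSum_apply]
      simp [Finsupp.single_apply]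
    ext a
    obtain ⟨i, g, rfl⟩ := cat_surj a
    have hL : φ (kappaHat R q n r s (Finsupp.single (k, l) 1)) (catIdx i g) =
        (-(q : R)) ^ (∑ t, ((l t : ℕ) + 1)) * FL q γ k l i g := by
      rw [kappa_single, map_smul, map_sum, Finsupp.smul_apply, Finsupp.finsetSum_apply]
      simp only [map_smul, Finsupp.smul_apply, ← hγ, smul_eq_mul]
      rfl
    rw [hL]
    simp only [Finsupp.finsetSum_apply, Finsupp.smul_apply, smul_eq_mul, hind, ← mul_assoc, hval]
    by_cases hg : ∀ t, Function.Injective (g t)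
    · choose j w hjw using fun t => exists_omit_comp (NeZero.pos n) (g t) (hg t)
      have eg : g = fun t => omitIdx (j t) ∘ w t := funext hjw
      have huniq : ∀ i' (j' : Fin s → Fin n) (w' : Fin s → Equiv.Perm (Fin (n - 1))),
          catIdx i' (fun t => omitIdx (j' t) ∘ w' t) = catIdx i g → i' = i ∧ j' = j ∧ w' = w := by
        intro i' j' w' h
        obtain ⟨h1, h2⟩ := cat_inj h
        rw [eg] at h2
        refine ⟨h1, ?_, ?_⟩
        · funext t; exact (omit_comp_inj (congrFun h2 t)).1
        · funext t; exact (omit_comp_inj (congrFun h2 t)).2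
      rw [Finset.sum_eq_single i, Finset.sum_eq_single j, Finset.sum_eq_single w]
      · rw [if_pos (by rw [eg]), eg, FL_perm H]; ring
      · intro w' _ hw'
        rw [if_neg (fun h => hw' (huniq _ _ _ h).2.2), mul_zero]
      · simp
      · intro j' _ hj'
        apply mul_eq_zero_of_right
        apply Finset.sum_eq_zero
        intro w' _
        rw [if_neg (fun h => hj' (huniq _ _ _ h).2.1), mul_zero]
      · simp
      · intro i' _ hi'
        apply Finset.sum_eq_zero
        intro j' _
        apply mul_eq_zero_of_right
        apply Finset.sum_eq_zero
        intro w' _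
        rw [if_neg (fun h => hi' (huniq _ _ _ h).1), mul_zero]
      · simp
    · push Not at hg
      obtain ⟨t, ht⟩ := hg
      rw [FL_zero H k l i g t ht, mul_zero]
      symm
      apply Finset.sum_eq_zero
      intro i' _
      apply Finset.sum_eq_zero
      intro j' _
      apply mul_eq_zero_of_right
      apply Finset.sum_eq_zero
      intro w' _
      rw [if_neg, mul_zero]
      intro h
      apply ht
      rw [← (cat_inj h).2]
      exact (omitIdx_strictMono _).injective.comp (w' t).injective
  refine ⟨F.domRestrict _, ?_, ?_, ?_⟩
  · intro a b h
    exact hF a b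
  · rintro _ ⟨y, rfl⟩
    induction y using Finsupp.induction_linear with
    | zero => simp
    | add f g hf hg =>
      rw [map_add, map_add]
      exact Submodule.add_mem _ hf hg
    | single kl c =>
      have e : Finsupp.single kl c = c • Finsupp.single (kl.1, kl.2) (1 : R) := by simp
      rw [e, map_smul, map_smul, main]
      apply Submodule.smul_mem
      refine Submodule.sum_mem _ (fun i _ => Submodule.sum_mem _ (fun j _ => ?_))
      exact Submodule.smul_mem _ _ ⟨_, rfl⟩
  · intro k l
    exact main k l
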